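/- arXiv:1508.03081 — 3 statements merged into one kernel-verified Lean document; each statement's English description precedes it below -/
import Mathlib

section
/- There exists an infinitely differentiable function g : ℝ → ℝ such that g(r) = 1/3 for all r ∈ [0, 1/10], g(r) = cosh(r) for all r ∈ [9/10, 1], g is monotone nondecreasing on [0,1], g(r) > 0 for all r ∈ [0,1], and ∫_0^1 g(r) dr = sinh(1). -/
/-!
Monotone functions that equal `c` up to `a` and `f` from `b` on have an integral between those of
the two extreme, discontinuous profiles: stay at `c` until `b`, or jump to `f b` already at `a`.
Any value strictly between is attained: rise smoothly from `c` to a plateau `d` just after `a`, and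
from `d` to `f` just before `b`. For steep enough steps, letting `d` run from `c` to (almost) `f b`
sweeps the integral across the prescribed value, so the intermediate value theorem applies. For
`f = cosh` this leaves the inequality `sinh (9/10) < 1/30 + (8/10) cosh (9/10)`.
-/

open Set Filter Topology

/-- The smooth monotone step from `0` on `(-∞, a]` to `1` on `[b, ∞)`, for `a < b`: Mathlib's
`Real.smoothTransition` rescaled from `[0, 1]` to `[a, b]`. -/
noncomputable def smoothStep (a b x : ℝ) : ℝ := Real.smoothTransition ((x - a) / (b - a))

namespace smoothStep

variable {a b x : ℝ}

lemma contDiff {n : ℕ∞} : ContDiff ℝ n (smoothStep a b) :=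
  Real.smoothTransition.contDiff.comp (by fun_prop)

lemma nonneg : 0 ≤ smoothStep a b x := Real.smoothTransition.nonneg _

lemma le_one : smoothStep a b x ≤ 1 := Real.smoothTransition.le_one _

lemma monotone (hab : a ≤ b) : Monotone (smoothStep a b) := fun _ _ hxy =>
  Real.smoothTransition.monotone <|
    div_le_div_of_nonneg_right (sub_le_sub_right hxy a) (sub_nonneg.2 hab)

lemma eq_zero_of_le (hab : a ≤ b) (hx : x ≤ a) : smoothStep a b x = 0 :=
  Real.smoothTransition.zero_of_nonpos <|
    div_nonpos_of_nonpos_of_nonneg (sub_nonpos.2 hx) (sub_nonneg.2 hab)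

lemma eq_one_of_le (hab : a < b) (hx : b ≤ x) : smoothStep a b x = 1 :=
  Real.smoothTransition.one_of_one_le <| (one_le_div (sub_pos.2 hab)).2 (sub_le_sub_right hx a)

lemma monotoneOn_mul {h : ℝ → ℝ} {r : ℝ} (hab : a ≤ b) (hmono : MonotoneOn h (Icc a r))
    (ha : 0 ≤ h a) : MonotoneOn (fun x => h x * smoothStep a b x) (Iic r) := by
  intro x hx y hy hxy
  have h_nonneg {z : ℝ} (haz : a ≤ z) (hz : z ≤ r) : 0 ≤ h z :=
    ha.trans (hmono ⟨le_rfl, haz.trans hz⟩ ⟨haz, hz⟩ haz)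
  rcases le_total y a with hya | hay
  · simp only [eq_zero_of_le hab hya, eq_zero_of_le hab (hxy.trans hya), mul_zero, le_refl]
  rcases le_total x a with hxa | hax
  · simpa only [eq_zero_of_le hab hxa, mul_zero] using mul_nonneg (h_nonneg hay hy) nonneg
  · exact mul_le_mul (hmono ⟨hax, hx⟩ ⟨hay, hy⟩ hxy) (monotone hab hxy) nonneg (h_nonneg hay hy)

end smoothStep

/-- The interpolation from the constant `c` on `(-∞, a]` to `f` on `[b, ∞)` that rises from `c` to
the plateau `d` over `[a, p]` and passes from `d` to `f` over `[q, b]`. -/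
noncomputable def plateau (f : ℝ → ℝ) (a p q b c d x : ℝ) : ℝ :=
  c + (d - c) * smoothStep a p x + (f x - d) * smoothStep q b x

namespace plateau

variable {f : ℝ → ℝ} {l a p q b r c d x : ℝ}

lemma contDiff {n : ℕ∞} (hf : ContDiff ℝ n f) : ContDiff ℝ n (plateau f a p q b c d) :=
  (contDiff_const.add (contDiff_const.mul smoothStep.contDiff)).add
    ((hf.sub contDiff_const).mul smoothStep.contDiff)

lemma eq_const_of_le (hap : a ≤ p) (hqb : q ≤ b) (hxa : x ≤ a) (hxq : x ≤ q) :
    plateau f a p q b c d x = c := by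
  simp [plateau, smoothStep.eq_zero_of_le hap hxa, smoothStep.eq_zero_of_le hqb hxq]

lemma eq_apply_of_le (hap : a < p) (hqb : q < b) (hpx : p ≤ x) (hbx : b ≤ x) :
    plateau f a p q b c d x = f x := by
  simp [plateau, smoothStep.eq_one_of_le hap hpx, smoothStep.eq_one_of_le hqb hbx]

lemma monotoneOn (hap : a ≤ p) (hqb : q ≤ b) (hcd : c ≤ d) (hmono : MonotoneOn f (Icc q r))
    (hdf : d ≤ f q) : MonotoneOn (plateau f a p q b c d) (Iic r) := by
  have rise_to_plateau : Monotone fun x => c + (d - c) * smoothStep a p x :=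
    ((smoothStep.monotone hap).const_mul (sub_nonneg.2 hcd)).const_add c
  have rise_to_f : MonotoneOn (fun x => (f x - d) * smoothStep q b x) (Iic r) :=
    smoothStep.monotoneOn_mul hqb (fun _ hx _ hy hxy => sub_le_sub_right (hmono hx hy hxy) d)
      (sub_nonneg.2 hdf)
  exact (rise_to_plateau.monotoneOn _).add rise_to_f

lemma eq_plateau (hap : a < p) (hqb : q ≤ b) (hpx : p ≤ x) (hxq : x ≤ q) :
    plateau f a p q b c d x = d := by
  simp [plateau, smoothStep.eq_one_of_le hap hpx, smoothStep.eq_zero_of_le hqb hxq]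

lemma le_apply (hcd : c ≤ d) (hdf : d ≤ f x) : plateau f a p q b c d x ≤ f x := by
  have rise_to_plateau_le : (d - c) * smoothStep a p x ≤ d - c :=
    mul_le_of_le_one_right (sub_nonneg.2 hcd) smoothStep.le_one
  have rise_to_f_le : (f x - d) * smoothStep q b x ≤ f x - d :=
    mul_le_of_le_one_right (sub_nonneg.2 hdf) smoothStep.le_one
  simp only [plateau]
  linarith

lemma continuous_integral (hf : Continuous f) :
    Continuous fun d => ∫ x in l..r, plateau f a p q b c d x := by
  have hS (u v : ℝ) : Continuous (smoothStep u v) := (smoothStep.contDiff (n := 0)).continuous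
  unfold plateau
  fun_prop

lemma intervalIntegrable (hf : Continuous f) :
    IntervalIntegrable (plateau f a p q b c d) MeasureTheory.volume l r :=
  (contDiff (n := 0) (contDiff_zero.2 hf)).continuous.intervalIntegrable _ _

lemma integral_le (hlq : l ≤ q) (hqb : q ≤ b) (hqr : q ≤ r) (hf : Continuous f)
    (hcf : ∀ x ∈ Icc q r, c ≤ f x) :
    ∫ x in l..r, plateau f a p q b c c x ≤ (q - l) * c + ∫ x in q..r, f x := by
  have on_left : ∫ x in l..q, plateau f a p q b c c x = (q - l) * c := by
    rw [← smul_eq_mul, ← intervalIntegral.integral_const]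
    refine intervalIntegral.integral_congr fun x hx => ?_
    rw [uIcc_of_le hlq] at hx
    simp [plateau, smoothStep.eq_zero_of_le hqb hx.2]
  have on_right : ∫ x in q..r, plateau f a p q b c c x ≤ ∫ x in q..r, f x :=
    intervalIntegral.integral_mono_on hqr (intervalIntegrable hf) (hf.intervalIntegrable _ _)
      fun x hx => le_apply le_rfl (hcf x hx)
  rw [← intervalIntegral.integral_add_adjacent_intervals (intervalIntegrable hf)
    (intervalIntegrable hf) (b := q), on_left]
  gcongr

lemma le_integral (hla : l ≤ a) (hap : a < p) (hpq : p ≤ q) (hqb : q < b) (hbr : b ≤ r)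
    (hf : Continuous f) (hmono : MonotoneOn f (Icc q r)) (hcd : c ≤ d) (hdf : d ≤ f q) :
    (p - l) * c + (b - p) * d + (∫ x in b..r, f x) ≤ ∫ x in l..r, plateau f a p q b c d x := by
  have hg := monotoneOn hap.le hqb.le hcd hmono hdf
  have on_left : (p - l) * c ≤ ∫ x in l..p, plateau f a p q b c d x := by
    rw [← smul_eq_mul, ← intervalIntegral.integral_const]
    refine intervalIntegral.integral_mono_on (by linarith) intervalIntegrable_const
      (intervalIntegrable hf) fun x hx => ?_
    calc c = plateau f a p q b c d l :=
          (eq_const_of_le hap.le hqb.le hla (by linarith)).symm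
      _ ≤ plateau f a p q b c d x :=
          hg (mem_Iic.2 (by linarith)) (mem_Iic.2 (by linarith [hx.2])) hx.1
  have on_middle : (b - p) * d ≤ ∫ x in p..b, plateau f a p q b c d x := by
    rw [← smul_eq_mul, ← intervalIntegral.integral_const]
    refine intervalIntegral.integral_mono_on (by linarith) intervalIntegrable_const
      (intervalIntegrable hf) fun x hx => ?_
    calc d = plateau f a p q b c d p := (eq_plateau hap hqb.le le_rfl hpq).symm
      _ ≤ plateau f a p q b c d x :=
          hg (mem_Iic.2 (by linarith)) (mem_Iic.2 (hx.2.trans hbr)) hx.1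
  have on_right : ∫ x in b..r, f x = ∫ x in b..r, plateau f a p q b c d x := by
    refine intervalIntegral.integral_congr fun x hx => ?_
    rw [uIcc_of_le hbr] at hx
    exact (eq_apply_of_le hap hqb (by linarith [hx.1]) hx.1).symm
  rw [← intervalIntegral.integral_add_adjacent_intervals (intervalIntegrable hf)
    (intervalIntegrable hf) (b := b), ← intervalIntegral.integral_add_adjacent_intervals
    (intervalIntegrable hf) (intervalIntegrable hf) (b := p), on_right]
  gcongr

end plateau

lemma exists_step_width {f : ℝ → ℝ} {l a b r c I : ℝ} (hab : a < b) (hf : Continuous f)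
    (hlow : (b - l) * c + (∫ x in b..r, f x) < I)
    (hhigh : I < (a - l) * c + (b - a) * f b + ∫ x in b..r, f x) :
    ∃ ε > 0, a + ε ≤ b - ε ∧ c ≤ f (b - ε) ∧
      (b - ε - l) * c + (∫ x in (b - ε)..r, f x) < I ∧
      I < (a + ε - l) * c + (b - (a + ε)) * f (b - ε) + ∫ x in b..r, f x := by
  have hc : c < f b := by
    have : 0 < (b - a) * (f b - c) := by linarith
    exact sub_pos.1 (pos_of_mul_pos_right this (sub_pos.2 hab).le)
  have h_int : Continuous fun ε => ∫ x in (b - ε)..r, f x := by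
    simp_rw [intervalIntegral.integral_symm r]
    fun_prop
  have h_width : ∀ᶠ ε in 𝓝 (0 : ℝ), a + ε < b - ε :=
    ContinuousAt.eventually_lt (by fun_prop) (by fun_prop) (by simpa)
  have h_f : ∀ᶠ ε in 𝓝 (0 : ℝ), c < f (b - ε) :=
    ContinuousAt.eventually_lt (by fun_prop) (by fun_prop) (by simpa)
  have h_low : ∀ᶠ ε in 𝓝 (0 : ℝ), (b - ε - l) * c + (∫ x in (b - ε)..r, f x) < I :=
    ContinuousAt.eventually_lt (by fun_prop) (by fun_prop) (by simpa)
  have h_high : ∀ᶠ ε in 𝓝 (0 : ℝ),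
      I < (a + ε - l) * c + (b - (a + ε)) * f (b - ε) + ∫ x in b..r, f x :=
    ContinuousAt.eventually_lt (by fun_prop) (by fun_prop) (by simpa)
  have h_all := (h_width.and (h_f.and (h_low.and h_high))).filter_mono
    (nhdsWithin_le_nhds (s := Ioi 0))
  obtain ⟨ε, ⟨hε, hcε, hlowε, hhighε⟩, hε_pos⟩ := (h_all.and self_mem_nhdsWithin).exists
  exact ⟨ε, hε_pos, hε.le, hcε.le, hlowε, hhighε⟩

theorem exists_smooth_interpolant_general {n : ℕ∞} {f : ℝ → ℝ} {l a b r c I : ℝ} (hla : l ≤ a)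
    (hab : a < b) (hbr : b ≤ r) (hf : ContDiff ℝ n f) (hmono : MonotoneOn f (Icc a r))
    (hlow : (b - l) * c + (∫ x in b..r, f x) < I)
    (hhigh : I < (a - l) * c + (b - a) * f b + ∫ x in b..r, f x) :
    ∃ g : ℝ → ℝ, ContDiff ℝ n g ∧ (∀ x ≤ a, g x = c) ∧ (∀ x ≥ b, g x = f x) ∧
      MonotoneOn g (Iic r) ∧ ∫ x in l..r, g x = I := by
  obtain ⟨ε, hε, hwidth, hcf, hlowε, hhighε⟩ := exists_step_width hab hf.continuous hlow hhigh
  have hap : a < a + ε := by linarith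
  have hqb : b - ε < b := by linarith
  have haq : a ≤ b - ε := by linarith
  have hmono_right : MonotoneOn f (Icc (b - ε) r) := hmono.mono (Icc_subset_Icc_left haq)
  have h_le : ∫ x in l..r, plateau f a (a + ε) (b - ε) b c c x ≤ I :=
    (plateau.integral_le (hla.trans haq) hqb.le (hqb.le.trans hbr) hf.continuous fun x hx =>
      hcf.trans (hmono_right ⟨le_rfl, hx.1.trans hx.2⟩ hx hx.1)).trans hlowε.le
  have h_ge : I ≤ ∫ x in l..r, plateau f a (a + ε) (b - ε) b c (f (b - ε)) x :=
    hhighε.le.trans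
      (plateau.le_integral hla hap hwidth hqb hbr hf.continuous hmono_right hcf le_rfl)
  obtain ⟨d, ⟨hcd, hdf⟩, hd⟩ := intermediate_value_Icc hcf
    (plateau.continuous_integral hf.continuous).continuousOn ⟨h_le, h_ge⟩
  exact ⟨plateau f a (a + ε) (b - ε) b c d, plateau.contDiff hf,
    fun x hx => plateau.eq_const_of_le hap.le hqb.le hx (hx.trans haq),
    fun x hx => plateau.eq_apply_of_le hap hqb (by linarith) hx,
    plateau.monotoneOn hap.le hqb.le hcd hmono_right hdf, hd⟩

lemma integral_cosh_eq (a b : ℝ) : ∫ x in a..b, Real.cosh x = Real.sinh b - Real.sinh a :=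
  intervalIntegral.integral_eq_sub_of_hasDerivAt (fun x _ => Real.hasDerivAt_sinh x)
    (Real.continuous_cosh.intervalIntegrable _ _)

-- Equivalent to `exp (2 * x) < 9`, hence the appeal to `exp 1 < 3`.
lemma sinh_lt_four_fifths_mul_cosh {x : ℝ} (hx : x ≤ 1) :
    Real.sinh x < 4 / 5 * Real.cosh x := by
  have h_exp : Real.exp x < 3 := (Real.exp_le_exp.2 hx).trans_lt Real.exp_one_lt_three
  have h_exp_neg : 1 / 3 < Real.exp (-x) := by
    rw [Real.exp_neg, ← one_div]
    exact one_div_lt_one_div_of_lt (Real.exp_pos x) h_exp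
  rw [Real.sinh_eq, Real.cosh_eq]
  linarith

/-- Existence of the smooth function `f'` used in the warping construction:
equal to `1/3` on `[0, 1/10]`, equal to `cosh` on `[9/10, 1]`, monotone
nondecreasing and positive on `[0,1]`, with integral `sinh 1` over `[0,1]`. -/
theorem exists_smooth_interpolant :
    ∃ g : ℝ → ℝ, ContDiff ℝ (⊤ : ℕ∞) g ∧
      (∀ r ∈ Set.Icc (0:ℝ) (1/10), g r = 1/3) ∧
      (∀ r ∈ Set.Icc (9/10 : ℝ) 1, g r = Real.cosh r) ∧
      MonotoneOn g (Set.Icc (0:ℝ) 1) ∧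
      (∀ r ∈ Set.Icc (0:ℝ) 1, 0 < g r) ∧
      (∫ r in (0:ℝ)..1, g r) = Real.sinh 1 := by
  have h_sinh : 9 / 10 ≤ Real.sinh (9 / 10) := Real.self_le_sinh_iff.2 (by norm_num)
  have h_cosh : Real.sinh (9 / 10) < 4 / 5 * Real.cosh (9 / 10) :=
    sinh_lt_four_fifths_mul_cosh (by norm_num)
  have h_mono : MonotoneOn Real.cosh (Icc (1 / 10) 1) :=
    Real.cosh_strictMonoOn.monotoneOn.mono fun x hx => mem_Ici.2 (by linarith [hx.1])
  obtain ⟨g, hg, hg_left, hg_right, hg_mono, hg_int⟩ :=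
    exists_smooth_interpolant_general (n := ⊤) (l := 0) (a := 1 / 10) (b := 9 / 10) (r := 1)
      (c := 1 / 3) (I := Real.sinh 1) (by norm_num) (by norm_num) (by norm_num)
      Real.contDiff_cosh h_mono (by rw [integral_cosh_eq]; linarith)
      (by rw [integral_cosh_eq]; linarith)
  refine ⟨g, hg, fun x hx => hg_left x hx.2, fun x hx => hg_right x hx.1,
    hg_mono.mono Icc_subset_Iic_self, fun x hx => ?_, hg_int⟩
  calc 0 < g 0 := by rw [hg_left 0 (by norm_num)]; norm_num
    _ ≤ g x := hg_mono (mem_Iic.2 zero_le_one) hx.2 hx.1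
end

section
/- There exists an infinitely differentiable function f : ℝ → ℝ such that f(r) = r/3 for all r ∈ [0, 1/10], f(r) = sinh(r) for all r ≥ 1, the derivative f′(r) is strictly positive for all r ≥ 0, and the second derivative f″(r) is nonnegative for all r ≥ 0. In particular f(0) = 0. -/
/-!
Two smooth convex functions, `G` on `(-∞, a]` and `F` on `[b, ∞)`, extend to a single smooth convex
function as soon as the slope of the chord from `(a, G a)` to `(b, F b)` lies strictly between
`G' a` and `F' b`. On the level of derivatives one needs a smooth monotone function that continues
`G'` and `F'` and has integral `F b - G a` over `[a, b]`. Such a function is obtained by passing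
from `G'` to a constant `A` just after `a`, and from `A` to `F'` just before `b`: the integral
depends continuously on `A`, is too small for `A` close to `G' a` and too large for `A` close to
`F' b`. The warping function is the case `G r = r / 3`, `F = sinh`, `a = 1 / 10`, `b = 1`.
-/

open Set Filter Topology

section SmoothBlend

/-- The smooth transition from `u` to `v` across `[p, q]`: it is `u` up to `p`, `v` from `q` on, and
a convex combination of the two in between. Meant for `p < q`. -/
noncomputable def smoothBlend (p q : ℝ) (u v : ℝ → ℝ) (x : ℝ) : ℝ :=
  (1 - Real.smoothTransition ((x - p) / (q - p))) * u x +
    Real.smoothTransition ((x - p) / (q - p)) * v x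

variable {p q x : ℝ} {u v : ℝ → ℝ}

theorem smoothBlend_of_le (hpq : p < q) (hx : x ≤ p) : smoothBlend p q u v x = u x := by
  have h : (x - p) / (q - p) ≤ 0 := div_nonpos_of_nonpos_of_nonneg (by linarith) (by linarith)
  simp [smoothBlend, Real.smoothTransition.zero_of_nonpos h]

theorem smoothBlend_of_ge (hpq : p < q) (hx : q ≤ x) : smoothBlend p q u v x = v x := by
  have h : 1 ≤ (x - p) / (q - p) := (one_le_div (by linarith)).2 (by linarith)
  simp [smoothBlend, Real.smoothTransition.one_of_one_le h]

theorem contDiff_smoothBlend {n : ℕ∞} (hu : ContDiff ℝ n u) (hv : ContDiff ℝ n v) :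
    ContDiff ℝ n (smoothBlend p q u v) := by
  have hs : ContDiff ℝ n fun x => Real.smoothTransition ((x - p) / (q - p)) :=
    Real.smoothTransition.contDiff.comp ((contDiff_id.sub contDiff_const).div_const _)
  exact ((contDiff_const.sub hs).mul hu).add (hs.mul hv)

theorem monotoneOn_smoothBlend_Icc (hu : MonotoneOn u (Icc p q))
    (hv : MonotoneOn v (Icc p q)) (huv : ∀ x ∈ Icc p q, u x ≤ v x) :
    MonotoneOn (smoothBlend p q u v) (Icc p q) := by
  intro x hx y hy hxy
  set s : ℝ := Real.smoothTransition ((x - p) / (q - p))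
  set t : ℝ := Real.smoothTransition ((y - p) / (q - p))
  have hs₀ : 0 ≤ s := Real.smoothTransition.nonneg _
  have hs₁ : 0 ≤ 1 - s := sub_nonneg.2 (Real.smoothTransition.le_one _)
  have hst : s ≤ t := Real.smoothTransition.monotone
    (div_le_div_of_nonneg_right (by linarith) (sub_nonneg.2 (hx.1.trans hx.2)))
  calc (1 - s) * u x + s * v x
      ≤ (1 - s) * u y + s * v y :=
        add_le_add (mul_le_mul_of_nonneg_left (hu hx hy hxy) hs₁)
          (mul_le_mul_of_nonneg_left (hv hx hy hxy) hs₀)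
    _ ≤ (1 - t) * u y + t * v y := by
        linarith [mul_nonneg (sub_nonneg.2 hst) (sub_nonneg.2 (huv y hy))]

theorem monotone_smoothBlend (hpq : p < q) (hu : MonotoneOn u (Iic q)) (hv : MonotoneOn v (Ici p))
    (huv : ∀ x ∈ Icc p q, u x ≤ v x) : Monotone (smoothBlend p q u v) := by
  have left : MonotoneOn (smoothBlend p q u v) (Iic p) :=
    (hu.mono (Iic_subset_Iic.2 hpq.le)).congr fun x hx => (smoothBlend_of_le hpq hx).symm
  have middle : MonotoneOn (smoothBlend p q u v) (Icc p q) :=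
    monotoneOn_smoothBlend_Icc (hu.mono Icc_subset_Iic_self) (hv.mono Icc_subset_Ici_self) huv
  have right : MonotoneOn (smoothBlend p q u v) (Ici q) :=
    (hv.mono (Ici_subset_Ici.2 hpq.le)).congr fun x hx => (smoothBlend_of_ge hpq hx).symm
  refine left.Iic_union_Ici ?_
  rw [← Icc_union_Ici_eq_Ici hpq.le]
  exact middle.union_right right (isGreatest_Icc hpq.le) isLeast_Ici

end SmoothBlend

section PlateauBlend

/-- The smooth function that follows `u` up to `a`, is constantly `A` on `[p, q]`, and follows `v`
from `b` on. Meant for `a < p ≤ q < b`. -/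
noncomputable def plateauBlend (a p q b : ℝ) (u v : ℝ → ℝ) (A : ℝ) : ℝ → ℝ :=
  smoothBlend q b (smoothBlend a p u fun _ => A) v

variable {a p q b x A : ℝ} {u v : ℝ → ℝ}

theorem plateauBlend_of_le (hap : a < p) (hpq : p ≤ q) (hqb : q < b) (hx : x ≤ a) :
    plateauBlend a p q b u v A x = u x := by
  rw [plateauBlend, smoothBlend_of_le hqb (by linarith), smoothBlend_of_le hap hx]

theorem plateauBlend_of_mem_Icc (hap : a < p) (hqb : q < b) (hx : x ∈ Icc p q) :
    plateauBlend a p q b u v A x = A := by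
  rw [plateauBlend, smoothBlend_of_le hqb hx.2, smoothBlend_of_ge hap hx.1]

theorem plateauBlend_of_ge (hqb : q < b) (hx : b ≤ x) : plateauBlend a p q b u v A x = v x :=
  smoothBlend_of_ge hqb hx

theorem contDiff_plateauBlend {n : ℕ∞} (hu : ContDiff ℝ n u) (hv : ContDiff ℝ n v) :
    ContDiff ℝ n (plateauBlend a p q b u v A) :=
  contDiff_smoothBlend (contDiff_smoothBlend hu contDiff_const) hv

theorem monotone_plateauBlend (hap : a < p) (hpq : p ≤ q) (hqb : q < b)
    (hu : MonotoneOn u (Iic p)) (hv : MonotoneOn v (Ici q)) (huA : u p ≤ A) (hAv : A ≤ v q) :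
    Monotone (plateauBlend a p q b u v A) := by
  have left : Monotone (smoothBlend a p u fun _ => A) :=
    monotone_smoothBlend hap hu monotoneOn_const
      fun x hx => (hu hx.2 self_mem_Iic hx.2).trans huA
  refine monotone_smoothBlend hqb (left.monotoneOn _) hv fun x hx => ?_
  rw [smoothBlend_of_ge hap (hpq.trans hx.1)]
  exact hAv.trans (hv self_mem_Ici hx.1 hx.1)

theorem continuous_integral_plateauBlend (hu : Continuous u) (hv : Continuous v) (c d : ℝ) :
    Continuous fun A => ∫ x in c..d, plateauBlend a p q b u v A x := by
  refine intervalIntegral.continuous_parametric_intervalIntegral_of_continuous' ?_ c d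
  have := Real.smoothTransition.continuous
  simp only [Function.uncurry_def, plateauBlend, smoothBlend]
  fun_prop

end PlateauBlend

section Monotone

variable {g : ℝ → ℝ} {a c b : ℝ}

theorem integral_le_of_monotone_of_mem_Icc (hg : Monotone g) (hc : c ∈ Icc a b) :
    ∫ x in a..b, g x ≤ g c * (c - a) + g b * (b - c) := by
  have piece {s t : ℝ} (hst : s ≤ t) : ∫ x in s..t, g x ≤ g t * (t - s) := by
    simpa [mul_comm] using intervalIntegral.integral_mono_on (μ := MeasureTheory.volume) hst
      hg.intervalIntegrable (intervalIntegrable_const (c := g t)) fun x hx => hg hx.2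
  rw [← intervalIntegral.integral_add_adjacent_intervals hg.intervalIntegrable
    (hg.intervalIntegrable (a := c))]
  exact add_le_add (piece hc.1) (piece hc.2)

theorem le_integral_of_monotone_of_mem_Icc (hg : Monotone g) (hc : c ∈ Icc a b) :
    g a * (c - a) + g c * (b - c) ≤ ∫ x in a..b, g x := by
  have piece {s t : ℝ} (hst : s ≤ t) : g s * (t - s) ≤ ∫ x in s..t, g x := by
    simpa [mul_comm] using intervalIntegral.integral_mono_on (μ := MeasureTheory.volume) hst
      (intervalIntegrable_const (c := g s)) hg.intervalIntegrable fun x hx => hg hx.1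
  rw [← intervalIntegral.integral_add_adjacent_intervals hg.intervalIntegrable
    (hg.intervalIntegrable (a := c))]
  exact add_le_add (piece hc.1) (piece hc.2)

end Monotone

section Gluing

variable {a b I : ℝ} {u v F G : ℝ → ℝ}

theorem exists_plateau_endpoints (hab : a < b) (hu : Continuous u) (hv : Continuous v)
    (hI₁ : u a * (b - a) < I) (hI₂ : I < v b * (b - a)) :
    ∃ p q, a < p ∧ p ≤ q ∧ q < b ∧ u p ≤ v q ∧
      u p * (q - a) + v b * (b - q) < I ∧ I < u a * (p - a) + v q * (b - p) := by
  have huv : u a < v b := lt_of_mul_lt_mul_right (hI₁.trans hI₂) (sub_nonneg.2 hab.le)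
  have near {φ ψ : ℝ → ℝ} (hφ : Continuous φ) (hψ : Continuous ψ) (h : φ 0 < ψ 0) :
      ∀ᶠ δ in 𝓝[>] 0, φ δ < ψ δ :=
    nhdsWithin_le_nhds (hφ.continuousAt.eventually_lt hψ.continuousAt h)
  have order : ∀ᶠ δ in 𝓝[>] 0, a + δ < b - δ := near (by fun_prop) (by fun_prop) (by simpa)
  have height : ∀ᶠ δ in 𝓝[>] 0, u (a + δ) < v (b - δ) :=
    near (by fun_prop) (by fun_prop) (by simpa)
  have low : ∀ᶠ δ in 𝓝[>] 0, u (a + δ) * (b - δ - a) + v b * (b - (b - δ)) < I :=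
    near (by fun_prop) (by fun_prop) (by simpa)
  have high : ∀ᶠ δ in 𝓝[>] 0, I < u a * (a + δ - a) + v (b - δ) * (b - (a + δ)) :=
    near (by fun_prop) (by fun_prop) (by simpa)
  obtain ⟨δ, hδ, hpq, huv', hlow, hhigh⟩ :=
    (eventually_mem_nhdsWithin.and (order.and (height.and (low.and high)))).exists
  rw [mem_Ioi] at hδ
  exact ⟨a + δ, b - δ, by linarith, hpq.le, by linarith, huv'.le, hlow, hhigh⟩

theorem exists_contDiff_monotone_eqOn_integral_eq {n : ℕ∞} (hab : a < b)
    (hu : ContDiff ℝ n u) (hv : ContDiff ℝ n v)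
    (hu_mono : MonotoneOn u (Iic b)) (hv_mono : MonotoneOn v (Ici a))
    (hI₁ : u a * (b - a) < I) (hI₂ : I < v b * (b - a)) :
    ∃ g : ℝ → ℝ, ContDiff ℝ n g ∧ Monotone g ∧ EqOn g u (Iic a) ∧ EqOn g v (Ici b) ∧
      ∫ x in a..b, g x = I := by
  obtain ⟨p, q, hap, hpq, hqb, huv, hlow, hhigh⟩ :=
    exists_plateau_endpoints hab hu.continuous hv.continuous hI₁ hI₂
  let g : ℝ → ℝ → ℝ := plateauBlend a p q b u v
  have g_mono {A : ℝ} (hA : A ∈ Icc (u p) (v q)) : Monotone (g A) :=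
    monotone_plateauBlend hap hpq hqb (hu_mono.mono (Iic_subset_Iic.2 (by linarith)))
      (hv_mono.mono (Ici_subset_Ici.2 (by linarith))) hA.1 hA.2
  have g_left (A : ℝ) : EqOn (g A) u (Iic a) := fun x hx => plateauBlend_of_le hap hpq hqb hx
  have g_right (A : ℝ) : EqOn (g A) v (Ici b) := fun x hx => plateauBlend_of_ge hqb hx
  have low : ∫ x in a..b, g (u p) x ≤ I := by
    have h := integral_le_of_monotone_of_mem_Icc (g_mono (left_mem_Icc.2 huv))
      ⟨hap.le.trans hpq, hqb.le⟩
    have hq : g (u p) q = u p := plateauBlend_of_mem_Icc hap hqb (right_mem_Icc.2 hpq)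
    rw [hq, g_right _ self_mem_Ici] at h
    exact h.trans hlow.le
  have high : I ≤ ∫ x in a..b, g (v q) x := by
    have h := le_integral_of_monotone_of_mem_Icc (g_mono (right_mem_Icc.2 huv))
      ⟨hap.le, hpq.trans hqb.le⟩
    have hp : g (v q) p = v q := plateauBlend_of_mem_Icc hap hqb (left_mem_Icc.2 hpq)
    rw [hp, g_left _ self_mem_Iic] at h
    exact hhigh.le.trans h
  obtain ⟨A, hA, hAI⟩ := intermediate_value_Icc huv
    (continuous_integral_plateauBlend hu.continuous hv.continuous a b).continuousOn ⟨low, high⟩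
  exact ⟨g A, contDiff_plateauBlend hu hv, g_mono hA, g_left A, g_right A, hAI⟩

theorem exists_contDiff_convexOn_eqOn_Iic_eqOn_Ici {n : ℕ∞} (hab : a < b)
    (hG : ContDiff ℝ (n + 1) G) (hF : ContDiff ℝ (n + 1) F)
    (hG_conv : ConvexOn ℝ (Iic b) G) (hF_conv : ConvexOn ℝ (Ici a) F)
    (hG_tangent : G a + deriv G a * (b - a) < F b)
    (hF_tangent : F b + deriv F b * (a - b) < G a) :
    ∃ f : ℝ → ℝ, ContDiff ℝ (n + 1) f ∧ ConvexOn ℝ univ f ∧ EqOn f G (Iic a) ∧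
      EqOn f F (Ici b) := by
  obtain ⟨hG_diff, -, hG'⟩ := contDiff_succ_iff_deriv.1 hG
  obtain ⟨hF_diff, -, hF'⟩ := contDiff_succ_iff_deriv.1 hF
  obtain ⟨g, hg, hg_mono, hgG, hgF, hgI⟩ :=
    exists_contDiff_monotone_eqOn_integral_eq (I := F b - G a) hab hG' hF'
      (hG_conv.monotoneOn_deriv fun x _ => hG_diff x)
      (hF_conv.monotoneOn_deriv fun x _ => hF_diff x) (by linarith) (by linarith)
  let f : ℝ → ℝ := fun x => G a + ∫ t in a..x, g t
  have f_hasDerivAt (x : ℝ) : HasDerivAt f (g x) x :=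
    (hg.continuous.integral_hasStrictDerivAt a x).hasDerivAt.const_add (G a)
  have f_diff : Differentiable ℝ f := fun x => (f_hasDerivAt x).differentiableAt
  have f_deriv : deriv f = g := funext fun x => (f_hasDerivAt x).deriv
  refine ⟨f, contDiff_succ_iff_deriv.2 ⟨f_diff, by simp, f_deriv ▸ hg⟩,
    Monotone.convexOn_univ_of_deriv f_diff (f_deriv ▸ hg_mono), fun x hx => ?_, fun x hx => ?_⟩
  · have h : ∫ t in a..x, g t = G x - G a :=
      intervalIntegral.integral_eq_sub_of_hasDerivAt
        (fun t ht => hgG (ht.2.trans (max_le le_rfl hx)) ▸ (hG_diff t).hasDerivAt)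
        (hg.continuous.intervalIntegrable a x)
    simp [f, h]
  · have h : ∫ t in b..x, g t = F x - F b :=
      intervalIntegral.integral_eq_sub_of_hasDerivAt
        (fun t ht => hgF ((le_min le_rfl hx).trans ht.1) ▸ (hF_diff t).hasDerivAt)
        (hg.continuous.intervalIntegrable b x)
    calc f x = G a + ((∫ t in a..b, g t) + ∫ t in b..x, g t) := by
          rw [intervalIntegral.integral_add_adjacent_intervals] <;>
            exact hg.continuous.intervalIntegrable _ _
      _ = F x := by rw [hgI, h]; ring

end Gluing

theorem convexOn_sinh_Ici : ConvexOn ℝ (Ici 0) Real.sinh := by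
  refine MonotoneOn.convexOn_of_deriv (convex_Ici 0) Real.continuous_sinh.continuousOn
    Real.differentiable_sinh.differentiableOn ?_
  rw [Real.deriv_sinh]
  exact Real.cosh_strictMonoOn.monotoneOn.mono interior_subset

theorem sinh_one_lt_mul_cosh_one : Real.sinh 1 < 9 / 10 * Real.cosh 1 := by
  have h_exp : Real.exp 1 < 3 := Real.exp_one_lt_d9.trans (by norm_num)
  have h_exp_neg : 1 / 3 < Real.exp (-1) := by
    rw [Real.exp_neg, one_div]
    exact inv_strictAnti₀ (Real.exp_pos 1) h_exp
  rw [Real.sinh_eq, Real.cosh_eq]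
  linarith

/-- Existence of the warping function `f`: smooth, equal to `r/3` near `0`,
equal to `sinh r` for `r ≥ 1`, with `f' > 0` and `f'' ≥ 0` on `[0, ∞)`.
In particular `f 0 = 0`. -/
theorem exists_warping_function :
    ∃ f : ℝ → ℝ, ContDiff ℝ (⊤ : ℕ∞) f ∧
      (∀ r ∈ Set.Icc (0:ℝ) (1/10), f r = r / 3) ∧
      (∀ r : ℝ, 1 ≤ r → f r = Real.sinh r) ∧
      (∀ r : ℝ, 0 ≤ r → 0 < deriv f r) ∧
      (∀ r : ℝ, 0 ≤ r → 0 ≤ deriv (deriv f) r) ∧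
      f 0 = 0 := by
  have cone_deriv (r : ℝ) : deriv (fun r : ℝ => r / 3) r = 1 / 3 := by simp
  have cone_convex : ConvexOn ℝ (Iic 1) fun r : ℝ => r / 3 :=
    ((convexOn_id (convex_Iic 1)).smul (c := (3⁻¹ : ℝ)) (by norm_num)).congr
      fun r _ => by simp [div_eq_inv_mul]
  have sinh_deriv : deriv Real.sinh 1 = Real.cosh 1 := by rw [Real.deriv_sinh]
  have one_lt_sinh : 1 < Real.sinh 1 := Real.self_lt_sinh_iff.2 one_pos
  obtain ⟨f, hf, f_convex, f_cone, f_sinh⟩ :=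
    exists_contDiff_convexOn_eqOn_Iic_eqOn_Ici (n := ⊤) (a := 1 / 10) (G := fun r => r / 3)
      (by norm_num) (by fun_prop) Real.contDiff_sinh cone_convex
      (convexOn_sinh_Ici.subset (Ici_subset_Ici.2 (by norm_num)) (convex_Ici _))
      (by rw [cone_deriv]; linarith) (by linarith [sinh_one_lt_mul_cosh_one])
  have deriv_mono : Monotone (deriv f) := monotoneOn_univ.1 <|
    f_convex.monotoneOn_deriv fun x _ => hf.differentiable (by simp) x
  have deriv_zero : deriv f 0 = 1 / 3 := by
    rw [(f_cone.eventuallyEq_of_mem (Iic_mem_nhds (by norm_num))).deriv_eq, cone_deriv]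
  refine ⟨f, hf, fun r hr => f_cone hr.2, fun r hr => f_sinh hr, fun r hr => ?_,
    fun r _ => deriv_mono.deriv_nonneg, by simpa using f_cone (x := 0) (by simp)⟩
  linarith [deriv_mono hr]
end

section
/- Let r : ℝ → ℝ be continuous with r(x) > 0 for all x, and let U = { (x, v) ∈ ℝ × ℝ² : |x| < 1 and ‖v‖ < r(x) } (a subset of ℝ³ = ℝ × ℝ², with ℝ² carrying the Euclidean norm). Then the complement (ℝ × ℝ²) ∖ U, equipped with the subspace topology, is a simply connected topological space. -/
/-!
Rescaling each slice `{x} × ℝ²` by `r x` straightens `U` into the cylinder `(-1, 1) × B`, where `B`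
is the open unit ball. The complement of the cylinder is covered by its two open parts `-1 < x` and
`x < 1`. Each part slides along the axis into a half-space, hence is contractible, and the two parts
meet in `(-1, 1) × Bᶜ`, which is path-connected since the plane minus a disc is. Van Kampen's
theorem then applies.
-/

open Set Topology
open scoped Pointwise

section OpenCover

open Path.Homotopic.Quotient (mk mk_trans trans_assoc)

variable {X ι : Type*} [TopologicalSpace X]

theorem homotopicQuotient_induction_of_open_cover {V : ι → Set X} (hopen : ∀ i, IsOpen (V i))
    (hcover : ⋃ i, V i = univ) {P : ∀ {x y : X}, Path.Homotopic.Quotient x y → Prop}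
    (small : ∀ i {x y : X} (γ : Path x y), range γ ⊆ V i → P (mk γ))
    (trans : ∀ {x y z : X} (p : Path.Homotopic.Quotient x y) (q : Path.Homotopic.Quotient y z),
      P p → P q → P (p.trans q))
    {x y : X} (q : Path.Homotopic.Quotient x y) : P q := by
  induction q using Path.Homotopic.Quotient.ind with | mk γ
  obtain ⟨t, t_zero, t_mono, ⟨n, t_eq_one⟩, ht⟩ :=
    exists_monotone_Icc_subset_open_cover_unitInterval
      (fun i ↦ (hopen i).preimage γ.continuous) (by rw [← preimage_iUnion, hcover, preimage_univ])
  have subpath_of_subset {i} {s u} (hsu : s ≤ u) (h : Icc s u ⊆ γ ⁻¹' V i) :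
      P (mk (γ.subpath s u)) :=
    small i _ (by rwa [γ.range_subpath_of_le s u hsu, image_subset_iff])
  have initial_segment (m : ℕ) : P (mk (γ.subpath (t 0) (t m))) := by
    induction m with
    | zero =>
      obtain ⟨i, hi⟩ := ht 0
      exact subpath_of_subset le_rfl ((Icc_subset_Icc_right (t_mono zero_le_one)).trans hi)
    | succ m ih =>
      obtain ⟨i, hi⟩ := ht m
      have split : mk (γ.subpath (t 0) (t (m + 1))) =
          (mk (γ.subpath (t 0) (t m))).trans (mk (γ.subpath (t m) (t (m + 1)))) :=
        (Path.Homotopic.Quotient.eq.2 ⟨.subpathTransSubpath γ _ _ _⟩).symm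
      rw [split]
      exact trans _ _ ih (subpath_of_subset (t_mono m.le_succ) hi)
  have of_cast {x' y'} (hx : x' = x) (hy : y' = y) (h : P (mk (γ.cast hx hy))) : P (mk γ) := by
    subst hx hy
    exact h
  have whole := initial_segment n
  rw [t_zero, t_eq_one n le_rfl, γ.subpath_zero_one] at whole
  exact of_cast _ _ whole

theorem homotopic_of_range_subset {s : Set X} (hs : IsSimplyConnected s) {x y : X} {p q : Path x y}
    (hp : range p ⊆ s) (hq : range q ⊆ s) : p.Homotopic q := by
  have := hs.simplyConnectedSpace
  rw [range_subset_iff] at hp hq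
  let p' : Path (⟨x, p.source ▸ hp 0⟩ : s) ⟨y, p.target ▸ hp 1⟩ :=
    { toFun t := ⟨p t, hp t⟩, source' := by simp, target' := by simp }
  let q' : Path (⟨x, p.source ▸ hp 0⟩ : s) ⟨y, p.target ▸ hp 1⟩ :=
    { toFun t := ⟨q t, hq t⟩, source' := by simp, target' := by simp }
  exact (SimplyConnectedSpace.paths_homotopic p' q').map ⟨Subtype.val, continuous_subtype_val⟩

theorem homotopic_of_isPathConnected_inter {s t : Set X} (hs : IsSimplyConnected s)
    (ht : IsSimplyConnected t) (hst : IsPathConnected (s ∩ t)) {x y : X} {p q : Path x y}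
    (hp : range p ⊆ s) (hq : range q ⊆ t) : p.Homotopic q := by
  have hx : x ∈ s ∩ t := ⟨hp p.source_mem_range, hq q.source_mem_range⟩
  have hy : y ∈ s ∩ t := ⟨hp p.target_mem_range, hq q.target_mem_range⟩
  obtain ⟨γ, hγ⟩ := hst.joinedIn x hx y hy
  rw [← range_subset_iff, subset_inter_iff] at hγ
  exact (homotopic_of_range_subset hs hp hγ.1).trans (homotopic_of_range_subset ht hγ.2 hq)

/- Choose, for each point `x`, a path `c x` from the base point to `x` inside one member of the
cover. Its homotopy class does not depend on the member, so `[c x] * [γ] = [c y]` for every short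
path `γ` from `x` to `y`, hence for every path. -/
theorem simplyConnectedSpace_of_open_cover {V : ι → Set X} (hopen : ∀ i, IsOpen (V i))
    (hcover : ⋃ i, V i = univ) (hV : ∀ i, IsSimplyConnected (V i))
    (hinter : ∀ i j, IsPathConnected (V i ∩ V j)) (hbase : (⋂ i, V i).Nonempty) :
    SimplyConnectedSpace X := by
  obtain ⟨x₀, hx₀⟩ := hbase
  rw [mem_iInter] at hx₀
  have joined {i} {x} (hx : x ∈ V i) : ∃ γ : Path x₀ x, range γ ⊆ V i := by
    simpa only [range_subset_iff, JoinedIn] using (hV i).isPathConnected.joinedIn x₀ (hx₀ i) x hx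
  have exists_short (x : X) : ∃ i, ∃ γ : Path x₀ x, range γ ⊆ V i :=
    (iUnion_eq_univ_iff.1 hcover x).imp fun _ ↦ joined
  choose k c hc using exists_short
  have mk_eq_mk_c {i} {x} {γ : Path x₀ x} (hγ : range γ ⊆ V i) : mk γ = mk (c x) :=
    Path.Homotopic.Quotient.eq.2
      (homotopic_of_isPathConnected_inter (hV i) (hV (k x)) (hinter i (k x)) hγ (hc x))
  have c_trans {x y : X} (q : Path.Homotopic.Quotient x y) : (mk (c x)).trans q = mk (c y) := by
    induction q using homotopicQuotient_induction_of_open_cover hopen hcover with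
    | small i γ hγ =>
      obtain ⟨p, hp⟩ := joined (hγ γ.source_mem_range)
      rw [← mk_eq_mk_c hp, ← mk_trans]
      exact mk_eq_mk_c (i := i) (by rw [Path.trans_range]; exact union_subset hp hγ)
    | trans p q hp hq => rw [← trans_assoc, hp, hq]
  have eq_symm_trans {x y : X} (q : Path.Homotopic.Quotient x y) :
      q = (mk (c x)).symm.trans (mk (c y)) := by
    rw [← c_trans q, ← trans_assoc, Path.Homotopic.Quotient.symm_trans,
      Path.Homotopic.Quotient.refl_trans]
  refine simply_connected_iff_paths_homotopic.2
    ⟨⟨⟨x₀⟩, fun x y ↦ ⟨(c x).symm.trans (c y)⟩⟩, fun x y ↦ ⟨fun p q ↦ ?_⟩⟩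
  rw [eq_symm_trans p, eq_symm_trans q]

theorem isSimplyConnected_of_subset_union {s U V : Set X} (hU : IsOpen U) (hV : IsOpen V)
    (hs : s ⊆ U ∪ V) (hsU : IsSimplyConnected (s ∩ U)) (hsV : IsSimplyConnected (s ∩ V))
    (hsUV : IsPathConnected (s ∩ (U ∩ V))) : IsSimplyConnected s := by
  let W : Bool → Set s := fun i ↦ Subtype.val ⁻¹' cond i U V
  have hW (i) : IsSimplyConnected (W i) := by
    rw [← IsEmbedding.subtypeVal.isSimplyConnected_image, Subtype.image_preimage_coe]
    cases i <;> assumption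
  have hinter : IsPathConnected (W true ∩ W false) := by
    rwa [IsInducing.subtypeVal.isPathConnected_iff, ← preimage_inter, Subtype.image_preimage_coe]
  refine simplyConnectedSpace_of_open_cover (V := W) ?_ ?_ hW ?_ ?_
  · rintro (_ | _)
    exacts [hV.preimage continuous_subtype_val, hU.preimage continuous_subtype_val]
  · refine eq_univ_of_forall fun x ↦ mem_iUnion.2 ?_
    exact (hs x.2).elim (fun h ↦ ⟨true, h⟩) fun h ↦ ⟨false, h⟩
  · rintro (_ | _) (_ | _)
    · simpa only [inter_self] using (hW false).isPathConnected
    · rwa [inter_comm]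
    · exact hinter
    · simpa only [inter_self] using (hW true).isPathConnected
  · exact hinter.nonempty.imp fun x hx ↦ mem_iInter.2 (Bool.forall_bool.2 hx.symm)

end OpenCover

section Contractible

theorem contractibleSpace_of_id_homotopic_comp {X Y : Type*} [TopologicalSpace X]
    [TopologicalSpace Y] [ContractibleSpace Y] (g : C(Y, X)) (f : C(X, Y))
    (h : (ContinuousMap.id X).Homotopic (g.comp f)) : ContractibleSpace X := by
  obtain ⟨x, hx⟩ := ((id_nullhomotopic Y).comp_right g).comp_left f
  exact (contractible_iff_id_nullhomotopic X).2 ⟨x, h.trans hx⟩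

theorem contractibleSpace_of_add_mem_convex {E : Type*} [AddCommGroup E] [Module ℝ E]
    [TopologicalSpace E] [ContinuousAdd E] [ContinuousSMul ℝ E] {s K : Set E} {w : E}
    (hK : Convex ℝ K) (hK_nonempty : K.Nonempty) (hKs : K ⊆ s)
    (hs : ∀ x ∈ s, ∀ t ∈ Icc (0 : ℝ) 1, x + t • w ∈ s) (hsK : ∀ x ∈ s, x + w ∈ K) :
    ContractibleSpace s := by
  have := hK.contractibleSpace hK_nonempty
  let f : C(s, K) := ⟨fun x ↦ ⟨x + w, hsK x x.2⟩, by fun_prop⟩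
  let slide : (ContinuousMap.id s).Homotopy ((ContinuousMap.inclusion hKs).comp f) :=
    { toFun p := ⟨p.2 + (p.1 : ℝ) • w, hs p.2 p.2.2 p.1 p.1.2⟩
      continuous_toFun := by fun_prop
      map_zero_left x := by simp
      map_one_left x := Subtype.ext (congrArg (x.1 + ·) (one_smul ℝ w)) }
  exact contractibleSpace_of_id_homotopic_comp _ f ⟨slide⟩

end Contractible

section Prism

variable {F : Type*} [AddCommGroup F] [Module ℝ F] [TopologicalSpace F] [ContinuousAdd F]
  [ContinuousSMul ℝ F]

theorem contractibleSpace_compl_Ioo_prod_inter_lt_fst {a b : ℝ} (hab : a < b) (B : Set F) :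
    ContractibleSpace ↥((Ioo a b ×ˢ B)ᶜ ∩ {p | a < p.1}) := by
  refine contractibleSpace_of_add_mem_convex (K := {p : ℝ × F | b ≤ p.1}) (w := (b - a, 0))
    (convex_halfSpace_ge (LinearMap.fst ℝ ℝ F).isLinear b) ⟨(b, 0), le_refl b⟩ ?_ ?_ ?_
  · intro p (hp : b ≤ p.1)
    exact ⟨fun h ↦ hp.not_gt h.1.2, hab.trans_le hp⟩
  · rintro ⟨x, v⟩ ⟨hxv, hx : a < x⟩ t ⟨ht, -⟩
    have hle : x ≤ x + t * (b - a) := by nlinarith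
    simp only [mem_compl_iff, mem_prod, mem_Ioo, mem_inter_iff, mem_ofPred_eq, Prod.mk_add_mk,
      Prod.smul_mk, smul_eq_mul, smul_zero, add_zero] at hxv ⊢
    exact ⟨fun h ↦ hxv ⟨⟨hx, hle.trans_lt h.1.2⟩, h.2⟩, hx.trans_le hle⟩
  · rintro ⟨x, v⟩ ⟨-, hx : a < x⟩
    change b ≤ x + (b - a)
    linarith

theorem isSimplyConnected_compl_Ioo_prod_inter_lt_fst {a b : ℝ} (hab : a < b) (B : Set F) :
    IsSimplyConnected ((Ioo a b ×ˢ B)ᶜ ∩ {p | a < p.1}) :=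
  have := contractibleSpace_compl_Ioo_prod_inter_lt_fst hab B
  SimplyConnectedSpace.ofContractible _

theorem isSimplyConnected_compl_Ioo_prod_inter_fst_lt {a b : ℝ} (hab : a < b) (B : Set F) :
    IsSimplyConnected ((Ioo a b ×ˢ B)ᶜ ∩ {p | p.1 < b}) := by
  let reflect : ℝ × F ≃ₜ ℝ × F := (Homeomorph.neg ℝ).prodCongr (Homeomorph.refl F)
  rw [← reflect.isSimplyConnected_preimage]
  convert isSimplyConnected_compl_Ioo_prod_inter_lt_fst (neg_lt_neg hab) B using 1
  ext ⟨x, v⟩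
  simp [reflect, neg_lt, lt_neg, and_comm]

/- Up to homotopy, the complement is the suspension of `Bᶜ`. -/
theorem isSimplyConnected_compl_Ioo_prod {a b : ℝ} (hab : a < b) {B : Set F}
    (hB : IsPathConnected Bᶜ) : IsSimplyConnected (Ioo a b ×ˢ B)ᶜ := by
  refine isSimplyConnected_of_subset_union (U := {p | a < p.1}) (V := {p | p.1 < b})
    (isOpen_lt continuous_const continuous_fst) (isOpen_lt continuous_fst continuous_const) ?_
    (isSimplyConnected_compl_Ioo_prod_inter_lt_fst hab B)
    (isSimplyConnected_compl_Ioo_prod_inter_fst_lt hab B) ?_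
  · intro p _
    exact (lt_or_ge a p.1).imp_right fun h ↦ h.trans_lt hab
  · have hIoo : IsPathConnected (Ioo a b) := (convex_Ioo a b).isPathConnected (nonempty_Ioo.2 hab)
    convert hIoo.prod hB using 1
    ext p
    simp only [mem_inter_iff, mem_compl_iff, mem_prod, mem_Ioo, mem_ofPred_eq]
    tauto

end Prism

section Rescaling

/-- The fibrewise rescaling `(x, v) ↦ (x, f x • v)` of a product by a continuous nowhere vanishing
function `f` on the base. -/
def fiberwiseSMul {X 𝕜 M : Type*} [TopologicalSpace X] [GroupWithZero 𝕜] [TopologicalSpace 𝕜]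
    [ContinuousInv₀ 𝕜] [TopologicalSpace M] [MulAction 𝕜 M] [ContinuousSMul 𝕜 M] (f : X → 𝕜)
    (hf : Continuous f) (hf₀ : ∀ x, f x ≠ 0) : X × M ≃ₜ X × M where
  toFun p := (p.1, f p.1 • p.2)
  invFun p := (p.1, (f p.1)⁻¹ • p.2)
  left_inv p := by simp [smul_smul, hf₀]
  right_inv p := by simp [smul_smul, hf₀]
  continuous_toFun := by fun_prop
  continuous_invFun :=
    continuous_fst.prodMk (((hf.inv₀ hf₀).comp continuous_fst).smul continuous_snd)

theorem isSimplyConnected_compl_setOf_mem_smul {F : Type*} [AddCommGroup F] [Module ℝ F]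
    [TopologicalSpace F] [ContinuousAdd F] [ContinuousSMul ℝ F] {a b : ℝ} (hab : a < b)
    {r : ℝ → ℝ} (hr : ContinuousOn r (Icc a b)) (hr₀ : ∀ x ∈ Icc a b, r x ≠ 0) {B : Set F}
    (hB : IsPathConnected Bᶜ) :
    IsSimplyConnected {p : ℝ × F | p.1 ∈ Ioo a b ∧ p.2 ∈ r p.1 • B}ᶜ := by
  let ρ : ℝ → ℝ := IccExtend hab.le ((Icc a b).domRestrict r)
  have hρ : Continuous ρ := hr.domRestrict.Icc_extend'
  have hρ₀ (x) : ρ x ≠ 0 := hr₀ _ (projIcc a b hab.le x).2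
  have hρr {x} (hx : x ∈ Ioo a b) : ρ x = r x := IccExtend_of_mem _ _ (Ioo_subset_Icc_self hx)
  rw [← (fiberwiseSMul ρ hρ hρ₀).isSimplyConnected_preimage]
  convert isSimplyConnected_compl_Ioo_prod hab hB using 1
  rw [preimage_compl, compl_inj_iff]
  ext ⟨x, v⟩
  refine and_congr_right fun (hx : x ∈ Ioo a b) ↦ ?_
  change ρ x • v ∈ r x • B ↔ v ∈ B
  rw [← hρr hx, smul_mem_smul_set_iff₀ (hρ₀ x)]

end Rescaling

section Normed

variable {E : Type*} [NormedAddCommGroup E] [NormedSpace ℝ E]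

theorem isPathConnected_compl_ball (hE : 1 < Module.rank ℝ E) (x : E) (r : ℝ) :
    IsPathConnected (Metric.ball x r)ᶜ := by
  rcases le_or_gt r 0 with hr | hr
  · rw [Metric.ball_eq_empty.2 hr, compl_empty]
    exact isPathConnected_univ
  -- The radial retraction of `{x}ᶜ` onto the complement of the ball, precomposed with `y ↦ x + y`.
  let f : E → E := fun y ↦ x + max 1 (r * ‖y‖⁻¹) • y
  have hf : ContinuousOn f {0}ᶜ := by
    have hinv : ContinuousOn (fun y : E ↦ ‖y‖⁻¹) {0}ᶜ :=
      continuous_norm.continuousOn.inv₀ fun y hy ↦ norm_ne_zero_iff.2 hy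
    fun_prop
  convert (isPathConnected_compl_singleton_of_one_lt_rank hE 0).image' hf using 1
  ext y
  rw [mem_compl_iff, Metric.mem_ball, not_lt, dist_eq_norm]
  constructor
  · intro hy
    have hpos : 0 < ‖y - x‖ := hr.trans_le hy
    refine ⟨y - x, norm_pos_iff.1 hpos, ?_⟩
    have hle : r * ‖y - x‖⁻¹ ≤ 1 := mul_inv_le_one_of_le₀ hy hpos.le
    simp only [f, max_eq_left hle, one_smul, add_sub_cancel]
  · rintro ⟨z, hz, rfl⟩
    have hpos : 0 < ‖z‖ := norm_pos_iff.2 hz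
    calc r = r * ‖z‖⁻¹ * ‖z‖ := (inv_mul_cancel_right₀ hpos.ne' r).symm
      _ ≤ max 1 (r * ‖z‖⁻¹) * ‖z‖ := by gcongr; exact le_max_right _ _
      _ = ‖f z - x‖ := by
        rw [add_sub_cancel_left, norm_smul, Real.norm_of_nonneg (by positivity)]

theorem complement_simply_connected_general (hE : 1 < Module.rank ℝ E) {a b : ℝ} (hab : a < b)
    {r : ℝ → ℝ} (hr_cont : ContinuousOn r (Icc a b)) (hr_pos : ∀ x ∈ Icc a b, 0 < r x) :
    IsSimplyConnected {p : ℝ × E | p.1 ∈ Ioo a b ∧ ‖p.2‖ < r p.1}ᶜ := by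
  convert isSimplyConnected_compl_setOf_mem_smul hab hr_cont (fun x hx ↦ (hr_pos x hx).ne')
    (isPathConnected_compl_ball hE 0 1) using 4 with p
  refine and_congr_right fun hp ↦ ?_
  rw [smul_unitBall_of_pos (hr_pos _ (Ioo_subset_Icc_self hp)), mem_ball_zero_iff]

end Normed

/-- The complement of the region `U = {(x, v) : |x| < 1, ‖v‖ < r(x)}` in
`ℝ × ℝ²` is simply connected. -/
theorem complement_simply_connected
    (r : ℝ → ℝ) (hr_cont : Continuous r) (hr_pos : ∀ x, 0 < r x)
    (U : Set (ℝ × EuclideanSpace ℝ (Fin 2)))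
    (hU : U = {p : ℝ × EuclideanSpace ℝ (Fin 2) | |p.1| < 1 ∧ ‖p.2‖ < r p.1}) :
    SimplyConnectedSpace ↥Uᶜ := by
  have hU_Ioo : U = {p | p.1 ∈ Ioo (-1) 1 ∧ ‖p.2‖ < r p.1} := by
    simpa only [mem_Ioo, abs_lt] using hU
  rw [hU_Ioo]
  exact complement_simply_connected_general (by simp [← Module.finrank_eq_rank]) (by norm_num)
    hr_cont.continuousOn fun x _ ↦ hr_pos x
end
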